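/- 𝔏(F₂)^w_{O(n)} is a proper subset of 𝔏(F₂ × F₂)^w_{O(n)}: every language recognized by a weakly linear-time bounded F₂-automaton is recognized by a weakly linear-time bounded (F₂ × F₂)-automaton, and the non-context-free language { aⁿbⁿcⁿ : n ≥ 0 } is recognized in real time by an (F₂ × F₂)-automaton but is not in 𝔏(F₂)^w_{O(n)}. -/

import Mathlib

/-- A `G`-automaton over input alphabet `α`: a nondeterministic finite automaton
equipped with a register holding an element of the group `G`. -/
structure GAutomaton (α : Type*) (G : Type*) [Group G] where
  /-- the (finite) state set -/
  Q : Type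
  finQ : Finite Q
  /-- the initial state -/
  q0 : Q
  /-- the accepting states -/
  acc : Set Q
  /-- the (finite) transition relation; `none` stands for ε -/
  δ : Set (Q × Option α × Q × G)
  finδ : δ.Finite

namespace GAutomaton

variable {α : Type*} {G : Type*} [Group G]

/-- One computation step between configurations `(state, register, remaining input)`. -/
def Step (M : GAutomaton α G) (c c' : M.Q × G × List α) : Prop :=
  ∃ σ m, (c.1, σ, c'.1, m) ∈ M.δ ∧ c'.2.1 = c.2.1 * m ∧
    match σ with
    | none => c'.2.2 = c.2.2
    | some s => c.2.2 = s :: c'.2.2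

/-- `M.StepsIn k c c'` : configuration `c'` is reachable from `c` in exactly `k` steps. -/
def StepsIn (M : GAutomaton α G) : ℕ → (M.Q × G × List α) → (M.Q × G × List α) → Prop
  | 0, c, c' => c = c'
  | n + 1, c, c' => ∃ d, M.Step c d ∧ M.StepsIn n d c'

/-- `M` accepts the word `w` within `t` computation steps. -/
def AcceptsIn (M : GAutomaton α G) (w : List α) (t : ℕ) : Prop :=
  ∃ k ≤ t, ∃ q ∈ M.acc, M.StepsIn k (M.q0, 1, w) (q, 1, [])

/-- The language recognized by `M`. -/
def lang (M : GAutomaton α G) : Language α := {w | ∃ t, M.AcceptsIn w t}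

/-- `M` is real-time if every transition consumes an input symbol. -/
def RealTime (M : GAutomaton α G) : Prop := ∀ tr ∈ M.δ, tr.2.1 ≠ none

end GAutomaton

/-- `L ∈ 𝔏(G)` : the language `L` is recognized by some `G`-automaton. -/
def GRecognizable (G : Type*) [Group G] {α : Type*} (L : Language α) : Prop :=
  ∃ M : GAutomaton α G, M.lang = L

/-- `L ∈ 𝔏(G)ʷ_{t(n)}` : `L` is recognized by a weakly `t(n)` time-bounded `G`-automaton. -/
def GRecognizableInTime (G : Type*) [Group G] {α : Type*} (L : Language α) (t : ℕ → ℕ) : Prop :=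
  ∃ M : GAutomaton α G, M.lang = L ∧ ∀ w ∈ L, M.AcceptsIn w (t w.length)

/-- `L ∈ 𝔏(G)ʷ_{O(n)}` : `L` is recognized by a weakly linear-time bounded `G`-automaton. -/
def GRecognizableLinTime (G : Type*) [Group G] {α : Type*} (L : Language α) : Prop :=
  ∃ C : ℕ, GRecognizableInTime G L (fun n => C * n + C)

/-- The language `{ aⁿbⁿcⁿ : n ≥ 0 }` over the alphabet `{a, b, c}` (as `Fin 3`). -/
def ABC : Language (Fin 3) :=
  {w | ∃ n : ℕ,
    w = List.replicate n 0 ++ List.replicate n 1 ++ List.replicate n 2}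

section Interchange

variable {N α : Type*}

/-- `D n A x` is read as "the nonterminal `A` derives the word `x` by a derivation of size `n`".
`DerivationSplits D d` says that a derivation of a word longer than `d * b` contains a smaller
derivation of a factor longer than `b`, which may be replaced by any other derivation from the same
nonterminal. -/
def DerivationSplits (D : ℕ → N → List α → Prop) (d : ℕ) : Prop :=
  ∀ n A x b, 1 ≤ b → D n A x → d * b < x.length →
    ∃ m < n, ∃ B u y z, D m B y ∧ x = u ++ y ++ z ∧ b < y.length ∧
      ∀ k y', D k B y' → ∃ k', D k' A (u ++ y' ++ z)

/-- Every long derived word has a replaceable factor whose length lies in a prescribed window. -/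
theorem DerivationSplits.exists_factor {D : ℕ → N → List α → Prop} {d : ℕ}
    (hD : DerivationSplits D d) {b : ℕ} (hb : 1 ≤ b) {n : ℕ} {A : N} {x : List α}
    (hx : D n A x) (hbx : b < x.length) :
    ∃ B, ∃ m u y z, D m B y ∧ x = u ++ y ++ z ∧ b < y.length ∧ y.length ≤ d * b ∧
      ∀ k y', D k B y' → ∃ k', D k' A (u ++ y' ++ z) := by
  induction n using Nat.strong_induction_on generalizing A x with
  | _ n ih =>
    by_cases hle : x.length ≤ d * b
    · exact ⟨A, n, [], x, [], hx, by simp, hbx, hle, fun k y' h => ⟨k, by simpa using h⟩⟩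
    · obtain ⟨m, hm, B, u, y, z, hy, rfl, hby, hB⟩ := hD n A x b hb hx (by omega)
      obtain ⟨B', m', u', y', z', hy', rfl, hby', hle', hB'⟩ := ih m hm hy hby
      refine ⟨B', m', u ++ u', y', z' ++ z, hy', by simp, hby', hle', fun k v hv => ?_⟩
      obtain ⟨k', hk'⟩ := hB' k v hv
      obtain ⟨k'', hk''⟩ := hB k' _ hk'
      exact ⟨k'', by simpa using hk''⟩

/-- A language generated by finitely many nonterminals whose derivations split is not
`{aⁿbⁿcⁿ}`. -/
theorem DerivationSplits.ne_ABC {D : ℕ → N → List (Fin 3) → Prop} {d : ℕ}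
    (hD : DerivationSplits D d) (hfin : {A | ∃ n x, D n A x}.Finite) {S : Set N}
    {L : Language (Fin 3)} (hL : ∀ w, w ∈ L ↔ ∃ A ∈ S, ∃ n, D n A w) : L ≠ ABC := by
  intro hABC
  set c := hfin.toFinset.card with hc
  set n := (d + 1) ^ (c + 1) with hn
  have hw : List.replicate n 0 ++ List.replicate n 1 ++ List.replicate n 2 ∈ ABC := ⟨n, rfl⟩
  rw [← hABC, hL] at hw
  obtain ⟨A, hA, t, ht⟩ := hw
  have hpow : ∀ i, 1 ≤ (d + 1) ^ i := fun i => Nat.one_le_pow _ _ (by omega)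
  have hmono : ∀ {i j}, i ≤ j → (d + 1) ^ i ≤ (d + 1) ^ j := fun h =>
    Nat.pow_le_pow_right (by omega) h
  have hfac : ∀ i : Finset.range (c + 1), _ := fun i =>
    hD.exists_factor (hpow i.1) ht (by
      have := hmono (show i.1 ≤ c + 1 by have := Finset.mem_range.1 i.2; omega)
      have := hpow (c + 1)
      simp only [List.length_append, List.length_replicate]
      omega)
  choose B m u y z hy hx hlo hhi hB using hfac
  obtain ⟨i, j, hij, hBij⟩ : ∃ i j, i.1 < j.1 ∧ B i = B j := by
    obtain ⟨i, -, j, -, hne, h⟩ := Finset.exists_ne_map_eq_of_card_lt_of_maps_to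
      (s := (Finset.univ : Finset (Finset.range (c + 1)))) (t := hfin.toFinset) (f := B)
      (by simp [hc]) (fun i _ => by simpa using ⟨m i, y i, hy i⟩)
    rcases lt_or_gt_of_ne (fun h => hne (Subtype.ext h) : i.1 ≠ j.1) with h' | h'
    · exact ⟨i, j, h', h⟩
    · exact ⟨j, i, h', h.symm⟩
  have hjc : j.1 ≤ c := by have := Finset.mem_range.1 j.2; omega
  have hlt : (y i).length < (y j).length := by
    have h1 := hhi i
    have h2 := hlo j
    have h3 := hmono (show i.1 + 1 ≤ j.1 from hij)
    rw [pow_succ] at h3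
    have h4 := hpow i.1
    nlinarith
  have hsmall : (y j).length < n := by
    have h1 := hhi j
    have h2 := hmono hjc
    have h3 := hpow c
    rw [hn, pow_succ]
    nlinarith
  obtain ⟨k, hk⟩ := hB j (m i) (y i) (hBij ▸ hy i)
  have hmem : u j ++ y i ++ z j ∈ ABC := by
    rw [← hABC, hL]; exact ⟨A, hA, k, hk⟩
  obtain ⟨p, hp⟩ := hmem
  have hxj := hx j
  have hlen := congrArg List.length hxj
  have hlen' := congrArg List.length hp
  have h0 := congrArg (List.count 0) hp
  have h2 := congrArg (List.count 2) hp
  simp only [List.length_append, List.length_replicate] at hlen hlen'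
  simp [List.count_replicate] at h0 h2
  have hnp : n ≤ p := by
    rcases (by omega : n ≤ (u j).length ∨ n ≤ (z j).length) with hu | hz
    · have hpre : List.replicate n 0 <+: u j := List.prefix_of_prefix_length_le
        (l₃ := u j ++ (y j ++ z j))
        ⟨List.replicate n 1 ++ List.replicate n 2, by simpa using hxj⟩ ⟨_, rfl⟩ (by simpa)
      have := hpre.sublist.count_le 0
      simp at this
      omega
    · have hsuf : List.replicate n 2 <:+ z j := List.suffix_of_suffix_length_le
        (l₃ := u j ++ y j ++ z j) ⟨_, hxj⟩ ⟨_, rfl⟩ (by simpa)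
      have := hsuf.sublist.count_le 2
      simp at this
      omega
  omega

end Interchange

namespace ContextFreeGrammar

variable {T : Type*}

/-- `g.Yields n s x`: the string of symbols `s` derives the word `x` using `n` rule
applications. -/
inductive Yields (g : ContextFreeGrammar T) : ℕ → List (Symbol T g.NT) → List T → Prop
  | nil : Yields g 0 [] []
  | terminal (t : T) {n s x} (h : Yields g n s x) : Yields g n (.terminal t :: s) (t :: x)
  | nonterminal {r : ContextFreeRule T g.NT} (hr : r ∈ g.rules) {m n s x y}
      (hy : Yields g m r.output y) (hx : Yields g n s x) :
      Yields g (m + n + 1) (.nonterminal r.input :: s) (y ++ x)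

variable {g : ContextFreeGrammar T}

theorem Yields.append {m n : ℕ} {s t : List (Symbol T g.NT)} {x y : List T}
    (hs : g.Yields m s x) (ht : g.Yields n t y) : g.Yields (m + n) (s ++ t) (x ++ y) := by
  induction hs with
  | nil => simpa using ht
  | terminal a _ ih => exact .terminal a ih
  | nonterminal hr hy _ _ ih =>
    have := Yields.nonterminal hr hy ih
    rw [List.append_assoc, List.cons_append]
    convert this using 1
    omega

theorem Yields.exists_append {s t : List (Symbol T g.NT)} :
    ∀ {n : ℕ} {x : List T}, g.Yields n (s ++ t) x →
      ∃ k l u v, g.Yields k s u ∧ g.Yields l t v ∧ x = u ++ v := by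
  induction s with
  | nil => exact fun {n x} h => ⟨0, n, [], x, .nil, h, rfl⟩
  | cons a s ih =>
    intro n x h
    rw [List.cons_append] at h
    cases h with
    | terminal a h =>
      obtain ⟨k, l, u, v, hu, hv, rfl⟩ := ih h
      exact ⟨k, l, a :: u, v, .terminal a hu, hv, rfl⟩
    | nonterminal hr hy h =>
      obtain ⟨k, l, u, v, hu, hv, rfl⟩ := ih h
      exact ⟨_, l, _, v, .nonterminal hr hy hu, hv, by simp⟩

theorem yields_map_terminal (x : List T) : g.Yields 0 (x.map .terminal) x := by
  induction x with
  | nil => exact .nil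
  | cons a x ih => exact .terminal a ih

theorem Yields.derives {n : ℕ} {s : List (Symbol T g.NT)} {x : List T} (h : g.Yields n s x) :
    g.Derives s (x.map .terminal) := by
  induction h with
  | nil => exact .refl _
  | terminal a _ ih => exact ih.append_left [.terminal a]
  | @nonterminal r hr m n s x y _ _ ihy ihx =>
    have h₁ : g.Produces (.nonterminal r.input :: s) (r.output ++ s) := ⟨r, hr, .head s⟩
    rw [List.map_append]
    exact h₁.trans_derives ((ihy.append_right s).trans (ihx.append_left _))

theorem Derives.exists_yields {s : List (Symbol T g.NT)} {x : List T}
    (h : g.Derives s (x.map .terminal)) : ∃ n, g.Yields n s x := by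
  induction h using Relation.ReflTransGen.head_induction_on with
  | refl => exact ⟨0, yields_map_terminal x⟩
  | head hstep _ ih =>
    obtain ⟨n, hn⟩ := ih
    obtain ⟨r, hr, hrw⟩ := hstep
    obtain ⟨p, q, rfl, rfl⟩ := hrw.exists_parts
    obtain ⟨k, l, u, v, hu, hv, rfl⟩ := hn.exists_append
    obtain ⟨k', l', u', v', hu', hv', rfl⟩ := hu.exists_append
    have := (hu'.append (.nonterminal hr hv' .nil)).append hv
    rw [List.append_nil] at this
    exact ⟨_, this⟩

/-- A string of symbols yielding a word longer than `b` times its length contains a nonterminal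
yielding a factor longer than `b`. -/
theorem Yields.exists_long_factor {n : ℕ} {s : List (Symbol T g.NT)} {x : List T}
    (h : g.Yields n s x) {b : ℕ} (hb : 1 ≤ b) (hlong : s.length * b < x.length) :
    ∃ m ≤ n, ∃ B u y z, g.Yields m [.nonterminal B] y ∧ x = u ++ y ++ z ∧ b < y.length ∧
      ∀ k y', g.Yields k [.nonterminal B] y' → ∃ k', g.Yields k' s (u ++ y' ++ z) := by
  induction h with
  | nil => simp at hlong
  | terminal a _ ih =>
    simp only [List.length_cons, add_mul] at hlong
    obtain ⟨m, hm, B, u, y, z, hy, rfl, hby, hB⟩ := ih (by omega)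
    refine ⟨m, hm, B, a :: u, y, z, hy, rfl, hby, fun k y' h => ?_⟩
    obtain ⟨k', hk'⟩ := hB k y' h
    exact ⟨k', .terminal a hk'⟩
  | @nonterminal r hr m n s x y hy hx _ ih =>
    simp only [List.length_cons, add_mul, List.length_append] at hlong
    by_cases hby : b < y.length
    · refine ⟨m + 1, by omega, r.input, [], y, x, ?_, rfl, hby, fun k y' h => ?_⟩
      · simpa using Yields.nonterminal hr hy .nil
      · exact ⟨_, h.append hx⟩
    · obtain ⟨m', hm', B, u, v, z, hv, rfl, hbv, hB⟩ := ih (by omega)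
      refine ⟨m', by omega, B, y ++ u, v, z, hv, by simp, hbv, fun k y' h => ?_⟩
      obtain ⟨k', hk'⟩ := hB k y' h
      exact ⟨_, by simpa using Yields.nonterminal hr hy hk'⟩

theorem derivationSplits_yields (g : ContextFreeGrammar T) :
    DerivationSplits (fun n A => g.Yields n [.nonterminal A])
      (g.rules.sup fun r => r.output.length) := by
  intro n A x b hb h hlong
  cases h with
  | @nonterminal r hr m k _ v y hy hv =>
    cases hv
    have hle : r.output.length ≤ g.rules.sup fun r => r.output.length :=
      Finset.le_sup (f := fun r : ContextFreeRule T g.NT => r.output.length) hr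
    rw [List.append_nil] at hlong ⊢
    obtain ⟨m', hm', B, u, v, z, hv, rfl, hbv, hB⟩ :=
      hy.exists_long_factor hb ((Nat.mul_le_mul_right b hle).trans_lt hlong)
    refine ⟨m', by omega, B, u, v, z, hv, rfl, hbv, fun k y' h => ?_⟩
    obtain ⟨k', hk'⟩ := hB k y' h
    exact ⟨_, by simpa using Yields.nonterminal hr hk' .nil⟩

end ContextFreeGrammar

theorem not_isContextFree_ABC : ¬ ABC.IsContextFree := by
  rintro ⟨g, hg⟩
  refine g.derivationSplits_yields.ne_ABC (S := {g.initial}) ?_ (fun w => ?_) hg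
  · refine (g.rules.finite_toSet.image ContextFreeRule.input).subset ?_
    rintro A ⟨n, x, h⟩
    cases h with
    | nonterminal hr _ _ => exact ⟨_, hr, rfl⟩
  · rw [ContextFreeGrammar.mem_language_iff]
    simp only [Set.mem_singleton_iff, exists_eq_left]
    exact ⟨fun h => h.exists_yields, fun ⟨_, h⟩ => h.derives⟩

namespace GAutomaton

variable {α : Type*}

theorem StepsIn.trans {G : Type*} [Group G] {M : GAutomaton α G} {m n : ℕ}
    {c d e : M.Q × G × List α} (h₁ : M.StepsIn m c d) (h₂ : M.StepsIn n d e) :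
    M.StepsIn (m + n) c e := by
  induction m generalizing c with
  | zero => cases h₁; simpa using h₂
  | succ m ih =>
    obtain ⟨c', hc, hd⟩ := h₁
    rw [Nat.succ_add]
    exact ⟨c', hc, ih hd⟩

section FreeGroup

variable {X : Type*} [DecidableEq X] (M : GAutomaton α (FreeGroup X)) (R : ℕ)

/-- A balanced computation of `M` that reads the given word. A pair `(q, u)` stands for the state
`q` with the word `u` still to be multiplied to the register, and `M.Balanced R n (p, u) (q, v) x`
says that reading `x` leads from `(p, u)` to `(q, v)` with no net change of the register. Pending
words have length at most `R`. -/
inductive Balanced : ℕ → M.Q × List (X × Bool) → M.Q × List (X × Bool) → List α → Prop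
  | refl (v : M.Q × List (X × Bool)) (hv : v.2.length ≤ R) : Balanced 0 v v []
  | read {p σ q m} (h : (p, σ, q, m) ∈ M.δ) (hm : m.toWord.length ≤ R) :
      Balanced 0 (p, []) (q, m.toWord) σ.toList
  | comp {m n u v w x y} (h₁ : Balanced m u v x) (h₂ : Balanced n v w y) :
      Balanced (m + n + 1) u w (x ++ y)
  | wrap {n p u q v y} (l : X × Bool) (hu : u.length < R)
      (h : Balanced n (p, u) (q, (l.1, !l.2) :: v) y) : Balanced (n + 1) (p, l :: u) (q, v) y

variable {M R}

theorem Balanced.length_le {n : ℕ} {a b : M.Q × List (X × Bool)} {x : List α}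
    (h : M.Balanced R n a b x) : a.2.length ≤ R ∧ b.2.length ≤ R := by
  induction h with
  | refl v hv => exact ⟨hv, hv⟩
  | read h hm => exact ⟨by simp, hm⟩
  | comp _ _ ih₁ ih₂ => exact ⟨ih₁.1, ih₂.2⟩
  | wrap l hu _ ih => simp at ih ⊢; omega

/-- A balanced computation can be carried out by the automaton. -/
theorem Balanced.exists_stepsIn {n : ℕ} {a b : M.Q × List (X × Bool)} {x : List α}
    (h : M.Balanced R n a b x) (g : FreeGroup X) (r : List α) :
    ∃ k, M.StepsIn k (a.1, g * FreeGroup.mk a.2, x ++ r) (b.1, g * FreeGroup.mk b.2, r) := by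
  induction h generalizing g r with
  | refl v hv => exact ⟨0, rfl⟩
  | @read p σ q m h hm =>
    refine ⟨1, _, ⟨σ, m, h, ?_, ?_⟩, rfl⟩
    · simp [FreeGroup.mk_toWord, ← FreeGroup.one_eq_mk]
    · cases σ <;> simp
  | comp _ _ ih₁ ih₂ =>
    obtain ⟨k, hk⟩ := ih₁ g (_ ++ r)
    obtain ⟨l, hl⟩ := ih₂ g r
    exact ⟨k + l, by simpa using hk.trans hl⟩
  | @wrap n p u q v y l hu h ih =>
    obtain ⟨k, hk⟩ := ih (g * FreeGroup.mk [l]) r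
    have h₁ : FreeGroup.mk [l] * FreeGroup.mk ((l.1, !l.2) :: v) = FreeGroup.mk v := by
      rw [FreeGroup.mul_mk]
      exact Quot.sound (FreeGroup.Red.Step.cons_not (x := l.1) (b := l.2))
    rw [mul_assoc, mul_assoc, h₁, FreeGroup.mul_mk] at hk
    exact ⟨k, hk⟩

theorem derivationSplits_balanced (M : GAutomaton α (FreeGroup X)) (R : ℕ) :
    DerivationSplits (fun n (A : (M.Q × List (X × Bool)) × (M.Q × List (X × Bool))) =>
      M.Balanced R n A.1 A.2) 2 := by
  rintro n ⟨a, c⟩ x b hb h hlong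
  dsimp only at h
  cases h with
  | refl v hv => simp at hlong
  | @read p σ q m h hm => cases σ <;> simp at hlong; omega
  | @comp m n _ v _ x y h₁ h₂ =>
    rw [List.length_append] at hlong
    by_cases hx : b < x.length
    · exact ⟨m, by omega, (a, v), [], x, y, h₁, rfl, hx, fun k y' h => ⟨_, h.comp h₂⟩⟩
    · exact ⟨n, by omega, (v, c), x, y, [], h₂, by simp, by omega,
        fun k y' h => ⟨_, by simpa using h₁.comp h⟩⟩
  | @wrap n p u q v _ l hu h =>
    exact ⟨n, by omega, ((p, u), (q, (l.1, !l.2) :: v)), [], x, [], h, by simp, by omega,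
      fun k y' h' => ⟨_, by simpa using h'.wrap l hu⟩⟩

variable (M R) in
/-- A computation from `a` to `b` reading `x` whose effect on the register is the word `ls`, split
into balanced computations separated by the letters of `ls`. -/
def Factored : List (X × Bool) → M.Q × List (X × Bool) → M.Q × List (X × Bool) → List α → Prop
  | [], a, b, x => ∃ n, M.Balanced R n a b x
  | l :: ls, a, b, x => ∃ s u x₁ x₂, x = x₁ ++ x₂ ∧ (∃ n, M.Balanced R n a (s, l :: u) x₁) ∧
      Factored ls (s, u) b x₂

theorem Balanced.factored {n : ℕ} {ls : List (X × Bool)} {a b c : M.Q × List (X × Bool)}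
    {x y : List α} (h : M.Balanced R n a b x) (hf : M.Factored R ls b c y) :
    M.Factored R ls a c (x ++ y) := by
  cases ls with
  | nil =>
    obtain ⟨m, hm⟩ := hf
    exact ⟨_, h.comp hm⟩
  | cons l ls =>
    obtain ⟨s, u, x₁, x₂, rfl, ⟨m, hm⟩, hf⟩ := hf
    exact ⟨s, u, x ++ x₁, x₂, by simp, ⟨_, h.comp hm⟩, hf⟩

theorem Factored.cons {h : FreeGroup X} {s : M.Q} {l : X × Bool} {u : List (X × Bool)}
    {b : M.Q × List (X × Bool)} {x : List α} (hu : u.length < R)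
    (hf : M.Factored R h.toWord (s, u) b x) :
    M.Factored R (FreeGroup.mk [l] * h).toWord (s, l :: u) b x := by
  have hpush : M.Factored R (l :: h.toWord) (s, l :: u) b x :=
    ⟨s, u, [], x, rfl, ⟨0, .refl _ hu⟩, hf⟩
  rw [FreeGroup.toWord_mul, FreeGroup.toWord_mk, FreeGroup.reduce_singleton, List.singleton_append,
    FreeGroup.reduce.cons, FreeGroup.reduce_toWord]
  cases hw : h.toWord with
  | nil => simpa [hw] using hpush
  | cons l' ls =>
    rw [hw] at hf hpush
    dsimp only
    split_ifs with hl
    · obtain ⟨s', u', x₁, x₂, rfl, ⟨n, hn⟩, hf⟩ := hf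
      have hl' : l' = (l.1, !l.2) := by ext <;> simp [hl.1, hl.2]
      rw [hl'] at hn
      exact (hn.wrap l hu).factored hf
    · exact hpush

theorem Factored.mk_mul {h : FreeGroup X} {s : M.Q} {u : List (X × Bool)}
    {b : M.Q × List (X × Bool)} {x : List α} (hu : u.length ≤ R)
    (hf : M.Factored R h.toWord (s, []) b x) :
    M.Factored R (FreeGroup.mk u * h).toWord (s, u) b x := by
  induction u with
  | nil => simpa [← FreeGroup.one_eq_mk] using hf
  | cons l u ih =>
    have := (ih (by simp at hu; omega)).cons (l := l) hu
    rwa [← mul_assoc, FreeGroup.mul_mk] at this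

/-- Every computation ending with trivial register is factored. -/
theorem StepsIn.factored (hR : ∀ t ∈ M.δ, t.2.2.2.toWord.length ≤ R) {k : ℕ} {p q : M.Q}
    {g : FreeGroup X} {w : List α} (h : M.StepsIn k (p, g, w) (q, 1, [])) :
    M.Factored R g⁻¹.toWord (p, []) (q, []) w := by
  induction k generalizing p g w with
  | zero =>
    cases h
    simpa [Factored] using ⟨0, Balanced.refl (M := M) (R := R) (q, []) (by simp)⟩
  | succ k ih =>
    obtain ⟨⟨p', g', w'⟩, ⟨σ, m, hδ, hg, hw⟩, hk⟩ := h
    dsimp only at hδ hg hw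
    have h₁ := (ih hk).mk_mul (u := m.toWord) (hR _ hδ)
    have h₂ := (Balanced.read hδ (hR _ hδ)).factored h₁
    have hw' : σ.toList ++ w' = w := by cases σ <;> simp_all
    rwa [hw', FreeGroup.mk_toWord, hg, mul_inv_rev, mul_inv_cancel_left] at h₂

theorem mem_lang_iff_balanced (hR : ∀ t ∈ M.δ, t.2.2.2.toWord.length ≤ R) {w : List α} :
    w ∈ M.lang ↔ ∃ q ∈ M.acc, ∃ n, M.Balanced R n (M.q0, []) (q, []) w := by
  constructor
  · rintro ⟨t, k, -, q, hq, hk⟩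
    exact ⟨q, hq, by simpa [Factored] using hk.factored hR⟩
  · rintro ⟨q, hq, n, hn⟩
    obtain ⟨k, hk⟩ := hn.exists_stepsIn 1 []
    exact ⟨k, k, le_rfl, q, hq, by simpa [← FreeGroup.one_eq_mk] using hk⟩

end FreeGroup

/-- `{aⁿbⁿcⁿ}` is not recognized by any automaton over a free group of finite rank. -/
theorem lang_ne_ABC {X : Type*} [Finite X] (M : GAutomaton (Fin 3) (FreeGroup X)) :
    M.lang ≠ ABC := by
  classical
  have := M.finQ
  obtain ⟨R, hR⟩ : ∃ R, ∀ t ∈ M.δ, t.2.2.2.toWord.length ≤ R := by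
    obtain ⟨R, hR⟩ := (M.finδ.image fun t => t.2.2.2.toWord.length).bddAbove
    exact ⟨R, fun t ht => hR ⟨t, ht, rfl⟩⟩
  have hfin : {v : M.Q × List (X × Bool) | v.2.length ≤ R}.Finite :=
    (Set.finite_univ.prod (List.finite_length_le (X × Bool) R)).subset fun v hv => ⟨trivial, hv⟩
  refine (derivationSplits_balanced M R).ne_ABC ((hfin.prod hfin).subset ?_)
    (S := {A | A.1 = (M.q0, []) ∧ ∃ q ∈ M.acc, A.2 = (q, [])}) (fun w => ?_)
  · rintro ⟨a, b⟩ ⟨n, x, h⟩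
    exact h.length_le
  · rw [mem_lang_iff_balanced hR]
    constructor
    · rintro ⟨q, hq, n, hn⟩
      exact ⟨((M.q0, []), (q, [])), ⟨rfl, q, hq, rfl⟩, n, hn⟩
    · rintro ⟨⟨a, b⟩, ⟨rfl, q, hq, rfl⟩, n, hn⟩
      exact ⟨q, hq, n, hn⟩

section Prod

variable {G : Type*} [Group G] (H : Type*) [Group H]

/-- The automaton over `G × H` that ignores the second register. -/
def prodOne (M : GAutomaton α G) : GAutomaton α (G × H) where
  Q := M.Q
  finQ := M.finQ
  q0 := M.q0
  acc := M.acc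
  δ := (fun t => (t.1, t.2.1, t.2.2.1, t.2.2.2, 1)) '' M.δ
  finδ := M.finδ.image _

variable {M : GAutomaton α G} {H}

theorem StepsIn.prodOne {k : ℕ} {c d : M.Q × G × List α} (h : M.StepsIn k c d) :
    (M.prodOne H).StepsIn k (c.1, (c.2.1, 1), c.2.2) (d.1, (d.2.1, 1), d.2.2) := by
  induction k generalizing c with
  | zero => cases h; rfl
  | succ k ih =>
    obtain ⟨c', ⟨σ, m, hδ, hg, hw⟩, hk⟩ := h
    exact ⟨_, ⟨σ, (m, 1), ⟨_, hδ, rfl⟩, by simp [hg], hw⟩, ih hk⟩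

theorem StepsIn.of_prodOne {k : ℕ} {c d : M.Q × (G × H) × List α}
    (h : (M.prodOne H).StepsIn k c d) :
    M.StepsIn k (c.1, c.2.1.1, c.2.2) (d.1, d.2.1.1, d.2.2) := by
  induction k generalizing c with
  | zero => cases h; rfl
  | succ k ih =>
    obtain ⟨p, g, w⟩ := c
    obtain ⟨⟨p', g', w'⟩, ⟨σ, m, ⟨t, ht, htm⟩, hg, hw⟩, hk⟩ := h
    cases htm
    exact ⟨_, ⟨_, _, ht, congrArg Prod.fst hg, hw⟩, ih hk⟩

theorem acceptsIn_prodOne {w : List α} {t : ℕ} :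
    (M.prodOne H).AcceptsIn w t ↔ M.AcceptsIn w t :=
  ⟨fun ⟨k, hk, q, hq, h⟩ => ⟨k, hk, q, hq, h.of_prodOne⟩,
    fun ⟨k, hk, q, hq, h⟩ => ⟨k, hk, q, hq, h.prodOne⟩⟩

end Prod

end GAutomaton

theorem GRecognizableLinTime.prod {α G : Type*} [Group G] (H : Type*) [Group H] {L : Language α}
    (h : GRecognizableLinTime G L) : GRecognizableLinTime (G × H) L := by
  obtain ⟨C, M, hM, ht⟩ := h
  refine ⟨C, M.prodOne H, ?_, fun w hw => GAutomaton.acceptsIn_prodOne.2 (ht w hw)⟩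
  rw [← hM]
  ext w
  exact exists_congr fun t => GAutomaton.acceptsIn_prodOne

section RealTime

/-- The register update of `abcAutomaton` on a letter: the two components of the register record
the differences `#a - #b` and `#b - #c`. -/
def abcWeight : Fin 3 → FreeGroup (Fin 2) × FreeGroup (Fin 2) :=
  ![(.of 0, 1), ((.of 0)⁻¹, .of 0), (1, (.of 0)⁻¹)]

/-- A real-time automaton for `{aⁿbⁿcⁿ}`; its state is the last letter read. -/
def abcAutomaton : GAutomaton (Fin 3) (FreeGroup (Fin 2) × FreeGroup (Fin 2)) where
  Q := Fin 3
  finQ := inferInstance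
  q0 := 0
  acc := Set.univ
  δ := (fun t : Fin 3 × Fin 3 => (t.1, some t.2, t.2, abcWeight t.2)) '' {t | t.1 ≤ t.2}
  finδ := (Set.toFinite _).image _

theorem abcAutomaton_stepsIn_iff {i : Fin 3} {g : FreeGroup (Fin 2) × FreeGroup (Fin 2)}
    {w : List (Fin 3)} :
    (∃ k q, abcAutomaton.StepsIn k (i, g, w) (q, 1, [])) ↔
      (i :: w).Pairwise (· ≤ ·) ∧ g * (w.map abcWeight).prod = 1 := by
  induction w generalizing i g with
  | nil =>
    constructor
    · rintro ⟨k, q, h⟩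
      cases k with
      | zero => cases h; simp
      | succ k =>
        obtain ⟨⟨p, g', w'⟩, ⟨σ, m, ⟨⟨a, b⟩, ht, htm⟩, hg, hw⟩, hk⟩ := h
        cases htm
        simp at hw
    · rintro ⟨-, h⟩
      simp only [List.map_nil, List.prod_nil, mul_one] at h
      exact ⟨0, i, by rw [h]; rfl⟩
  | cons j w ih =>
    have hstep : (∃ k q, abcAutomaton.StepsIn k (i, g, j :: w) (q, 1, [])) ↔
        i ≤ j ∧ ∃ k q, abcAutomaton.StepsIn k (j, g * abcWeight j, w) (q, 1, []) := by
      constructor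
      · rintro ⟨k, q, h⟩
        cases k with
        | zero => cases h
        | succ k =>
          obtain ⟨⟨p, g', w'⟩, ⟨σ, m, ⟨⟨a, b⟩, ht, htm⟩, hg, hw⟩, hk⟩ := h
          cases htm
          cases hw
          dsimp only at hg
          subst hg
          exact ⟨ht, k, q, hk⟩
      · rintro ⟨hij, k, q, h⟩
        exact ⟨k + 1, q, _, ⟨some j, abcWeight j, ⟨(i, j), hij, rfl⟩, rfl, rfl⟩, h⟩
    rw [hstep, ih, List.map_cons, List.prod_cons, ← mul_assoc, ← and_assoc]
    refine and_congr_left fun _ => ?_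
    rw [← List.isChain_iff_pairwise, ← List.isChain_iff_pairwise, List.isChain_cons_cons]

theorem prod_map_abcWeight (w : List (Fin 3)) :
    (w.map abcWeight).prod =
      (.of 0 ^ ((w.count 0 : ℤ) - w.count 1), .of 0 ^ ((w.count 1 : ℤ) - w.count 2)) := by
  induction w with
  | nil => simp [Prod.one_eq_mk]
  | cons i w ih =>
    rw [List.map_cons, List.prod_cons, ih]
    fin_cases i <;> ext1 <;> simp [abcWeight]
    all_goals first | rw [← zpow_one_add] | rw [← zpow_neg_one, ← zpow_add]
    all_goals congr 1; ring

theorem of_zpow_eq_one_iff {X : Type*} {x : X} {k : ℤ} : FreeGroup.of x ^ k = 1 ↔ k = 0 := by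
  refine ⟨fun h => ?_, fun h => by simp [h]⟩
  have := congrArg (FreeGroup.lift fun _ : X => Multiplicative.ofAdd (1 : ℤ)) h
  simpa [← ofAdd_zsmul] using this

theorem eq_replicate_of_pairwise_le {w : List (Fin 3)} (h : w.Pairwise (· ≤ ·)) :
    w = List.replicate (w.count 0) 0 ++ List.replicate (w.count 1) 1 ++
      List.replicate (w.count 2) 2 := by
  refine List.Perm.eq_of_pairwise' h ?_ (List.perm_iff_count.2 fun a => ?_)
  · simp only [List.pairwise_append, List.mem_append, List.mem_replicate]
    grind
  · fin_cases a <;> simp [List.count_replicate]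

theorem lang_abcAutomaton : abcAutomaton.lang = ABC := by
  ext w
  have hlang : w ∈ abcAutomaton.lang ↔
      ∃ k q, abcAutomaton.StepsIn k ((0 : Fin 3), 1, w) (q, 1, []) :=
    ⟨fun ⟨_, k, _, q, _, h⟩ => ⟨k, q, h⟩, fun ⟨k, q, h⟩ => ⟨k, k, le_rfl, q, trivial, h⟩⟩
  rw [hlang, abcAutomaton_stepsIn_iff, one_mul, prod_map_abcWeight, Prod.mk_eq_one,
    of_zpow_eq_one_iff, of_zpow_eq_one_iff, sub_eq_zero, sub_eq_zero, Nat.cast_inj, Nat.cast_inj]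
  constructor
  · rintro ⟨h, h₁, h₂⟩
    have := eq_replicate_of_pairwise_le h.of_cons
    rw [← h₂, h₁] at this
    exact ⟨_, this⟩
  · rintro ⟨n, rfl⟩
    simp [List.pairwise_append, List.pairwise_replicate, List.count_replicate]

end RealTime

/-- `𝔏(F₂)ʷ_{O(n)} ⊊ 𝔏(F₂ × F₂)ʷ_{O(n)}`: every language recognized by
a weakly linear-time bounded `F₂`-automaton is recognized by a weakly linear-time bounded
`(F₂ × F₂)`-automaton, and the non-context-free language `{aⁿbⁿcⁿ}` is recognized in real
time by an `(F₂ × F₂)`-automaton but is not in `𝔏(F₂)ʷ_{O(n)}`. -/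
theorem F2_lintime_lt_F2xF2_lintime :
    (∀ (α : Type) [Fintype α] (L : Language α),
      GRecognizableLinTime (FreeGroup (Fin 2)) L →
        GRecognizableLinTime (FreeGroup (Fin 2) × FreeGroup (Fin 2)) L) ∧
    ¬ ABC.IsContextFree ∧
    (∃ M : GAutomaton (Fin 3) (FreeGroup (Fin 2) × FreeGroup (Fin 2)),
      M.RealTime ∧ M.lang = ABC) ∧
    ¬ GRecognizableLinTime (FreeGroup (Fin 2)) ABC := by
  refine ⟨fun α _ L h => h.prod _, not_isContextFree_ABC, ⟨abcAutomaton, ?_, lang_abcAutomaton⟩, ?_⟩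
  · rintro _ ⟨t, -, rfl⟩
    simp
  · rintro ⟨C, M, hM, -⟩
    exact M.lang_ne_ABC hM
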